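/- For every (k_1, k_2) \in \mathbb{Z}^2 with (k_1,k_2) \ne (0,0), the Fourier coefficient of the 2D potential V satisfies \hat V_{k_1,k_2} = (\pi/L^2) \big( (\pi R^3 \ell/(2 z^2)) [J_1(z)H_0(z) - J_0(z)H_1(z)] - (R^4/z^2) J_2(z) \big), where z = \pi R \sqrt{k_1^2 + k_2^2}/L. -/

import Mathlib

open Real MeasureTheory

/-- The 2D interaction potential: `V x = (|x| - ℓ)^2 - (R - ℓ)^2` for `|x| < R`, `0` otherwise,
where `|x| = √(x₁² + x₂²)` is the Euclidean norm. -/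
noncomputable def potV2 (R ℓ : ℝ) (x : ℝ × ℝ) : ℝ :=
  if Real.sqrt (x.1 ^ 2 + x.2 ^ 2) < R then
    (Real.sqrt (x.1 ^ 2 + x.2 ^ 2) - ℓ) ^ 2 - (R - ℓ) ^ 2
  else 0

/-- The `(k₁, k₂)`-th Fourier coefficient of `V` on the periodic square `[-L, L]²`. -/
noncomputable def Vhat2C (L R ℓ : ℝ) (k₁ k₂ : ℤ) : ℂ :=
  (1 / (2 * L)) ^ 2 *
    ∫ x in Set.Icc (-L) L ×ˢ Set.Icc (-L) L, (potV2 R ℓ x : ℂ) *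
      Complex.exp (-(Complex.I * (π : ℂ) * ((k₁ : ℂ) * (x.1 : ℂ) + (k₂ : ℂ) * (x.2 : ℂ)) /
        (L : ℂ)))

/-- The Bessel function of the first kind of order `i`. -/
noncomputable def besselJ (i : ℕ) (x : ℝ) : ℝ :=
  ∑' m : ℕ, ((-1 : ℝ) ^ m / (m.factorial * Real.Gamma (m + 1 + i))) * (x / 2) ^ (2 * m + i)

/-- The Struve function of order `i`. -/
noncomputable def struveH (i : ℕ) (x : ℝ) : ℝ :=
  ∑' m : ℕ, ((-1 : ℝ) ^ m / (Real.Gamma (m + 3 / 2) * Real.Gamma (m + i + 3 / 2))) *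
    (x / 2) ^ (2 * m + i + 1)


lemma fc_gamma_lb (a : ℝ) (ha : 1 ≤ a) (m : ℕ) :
    (m.factorial : ℝ) * Real.Gamma a ≤ Real.Gamma (m + a) := by
  induction m with
  | zero => simp
  | succ n ih =>
    have hpos : (0:ℝ) < n + a := by positivity
    have : ((n + 1 : ℕ) : ℝ) + a = (n + a) + 1 := by push_cast; ring
    rw [this, Real.Gamma_add_one hpos.ne', Nat.factorial_succ]
    push_cast
    have hG : 0 < Real.Gamma a := Real.Gamma_pos_of_pos (by linarith)
    calc ((n:ℝ) + 1) * n.factorial * Real.Gamma a = (n+1) * (n.factorial * Real.Gamma a) := by ring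
      _ ≤ (n + a) * Real.Gamma (n + a) := by gcongr

lemma fc_summable (c : ℕ → ℝ) (C : ℝ) (hc : ∀ m, |c m| ≤ C / m.factorial) (k : ℕ) (M : ℝ)
    (hM : 1 ≤ M) : Summable (fun m : ℕ => |c m| * (2 * m + k) * M ^ (2 * m + k)) := by
  have hM0 : 0 ≤ M := by linarith
  have hC : 0 ≤ C := by simpa using (abs_nonneg _).trans (hc 0)
  have h1 : Summable (fun m : ℕ => (C * (k + 2) * M ^ k) * ((2 * M ^ 2) ^ m / m.factorial)) :=
    (Real.summable_pow_div_factorial _).mul_left _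
  refine Summable.of_nonneg_of_le (fun m => by positivity) (fun m => ?_) h1
  have h2 : (2 * m + k : ℝ) ≤ (k + 2) * 2 ^ m := by
    have : (m:ℝ) + 1 ≤ 2 ^ m := by exact_mod_cast Nat.succ_le_of_lt (Nat.lt_two_pow_self)
    nlinarith [(Nat.cast_nonneg k : (0:ℝ) ≤ k), (Nat.cast_nonneg m : (0:ℝ) ≤ m)]
  calc |c m| * (2 * m + k) * M ^ (2 * m + k)
      ≤ (C / m.factorial) * ((k + 2) * 2 ^ m) * M ^ (2 * m + k) := by
        gcongr; exact hc m
    _ = _ := by rw [pow_add, pow_mul, mul_pow]; ring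

lemma fc_summable' (c : ℕ → ℝ) (C : ℝ) (hc : ∀ m, |c m| ≤ C / m.factorial) (k : ℕ) (x : ℝ) :
    Summable (fun m : ℕ => c m * (x / 2) ^ (2 * m + k)) := by
  have hC : 0 ≤ C := by simpa using (abs_nonneg _).trans (hc 0)
  have h1 : Summable (fun m : ℕ => (C * |x / 2| ^ k) * ((|x / 2| ^ 2) ^ m / m.factorial)) :=
    (Real.summable_pow_div_factorial _).mul_left _
  refine Summable.of_norm_bounded h1 (fun m => ?_)
  rw [Real.norm_eq_abs, abs_mul, abs_pow]
  calc |c m| * |x / 2| ^ (2 * m + k) ≤ (C / m.factorial) * |x / 2| ^ (2 * m + k) := by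
        gcongr; exact hc m
    _ = _ := by rw [pow_add, pow_mul]; ring

lemma fc_deriv (c : ℕ → ℝ) (C : ℝ) (hc : ∀ m, |c m| ≤ C / m.factorial) (k : ℕ) (x : ℝ) :
    HasDerivAt (fun y : ℝ => ∑' m : ℕ, c m * (y / 2) ^ (2 * m + k))
      (∑' m : ℕ, c m * ((2 * m + k) / 2) * (x / 2) ^ (2 * m + k - 1)) x := by
  set M : ℝ := |x| + 1 with hMdef
  have hM : 1 ≤ M := by have := abs_nonneg x; linarith
  have hx : x ∈ Metric.ball (0:ℝ) M := by simp [hMdef]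
  refine hasDerivAt_tsum_of_isPreconnected (fc_summable c C hc k M hM) Metric.isOpen_ball
    (convex_ball (0:ℝ) M).isPreconnected (g := fun m y => c m * (y / 2) ^ (2 * m + k))
    (g' := fun m y => c m * ((2 * m + k) / 2) * (y / 2) ^ (2 * m + k - 1))
    ?_ ?_ hx (fc_summable' c C hc k x) hx
  · intro m y _
    have := (((hasDerivAt_id y).div_const 2).pow (2 * m + k)).const_mul (c m)
    refine this.congr_deriv ?_
    push_cast
    simp only [id]
    ring
  · intro m y hy
    have hy' : |y| ≤ M := by
      have := Metric.mem_ball.1 hy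
      rw [dist_zero_right] at this
      exact this.le
    rw [Real.norm_eq_abs, abs_mul, abs_mul, abs_pow]
    have e1 : |y / 2| ≤ M := by rw [abs_div]; norm_num; linarith
    have e2 : |y / 2| ^ (2 * m + k - 1) ≤ M ^ (2 * m + k) :=
      (pow_le_pow_left₀ (abs_nonneg _) e1 _).trans (pow_le_pow_right₀ hM (Nat.sub_le _ _))
    have e3 : |((2 * m + k) / 2 : ℝ)| ≤ 2 * m + k := by
      rw [abs_of_nonneg (by positivity)]
      have : (0:ℝ) ≤ 2 * m + k := by positivity
      linarith
    gcongr

lemma fc_bessel_coef (i : ℕ) (m : ℕ) :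
    |(-1 : ℝ) ^ m / (m.factorial * Real.Gamma (m + 1 + i))| ≤
      (1 / Real.Gamma (1 + i)) / m.factorial := by
  have h := fc_gamma_lb (1 + i) (by have : (0:ℝ) ≤ i := by positivity
                                    linarith) m
  have hG : 0 < Real.Gamma (1 + i) := Real.Gamma_pos_of_pos (by positivity)
  rw [abs_div, abs_pow, abs_neg, abs_one, one_pow, div_div]
  rw [← add_assoc] at h
  have hf : (1:ℝ) ≤ m.factorial := by exact_mod_cast Nat.factorial_pos m
  have h2 : Real.Gamma (1 + i) ≤ Real.Gamma (m + 1 + i) := le_trans (by nlinarith) h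
  rw [abs_of_pos (by positivity), mul_comm (Real.Gamma _)]
  gcongr

lemma fc_struve_coef (i : ℕ) (m : ℕ) :
    |(-1 : ℝ) ^ m / (Real.Gamma (m + 3 / 2) * Real.Gamma (m + i + 3 / 2))| ≤
      (1 / (Real.Gamma (3 / 2) * Real.Gamma (i + 3 / 2))) / m.factorial := by
  have h1 := fc_gamma_lb (3 / 2) (by norm_num) m
  have h := fc_gamma_lb (i + 3 / 2) (by have : (0:ℝ) ≤ i := by positivity
                                        linarith) m
  have hG1 : 0 < Real.Gamma (3 / 2) := Real.Gamma_pos_of_pos (by positivity)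
  have hG : 0 < Real.Gamma (i + 3 / 2) := Real.Gamma_pos_of_pos (by positivity)
  rw [abs_div, abs_pow, abs_neg, abs_one, one_pow, div_div]
  rw [← add_assoc] at h
  have hf : (1:ℝ) ≤ m.factorial := by exact_mod_cast Nat.factorial_pos m
  have h2 : Real.Gamma (i + 3 / 2) ≤ Real.Gamma (m + i + 3 / 2) := le_trans (by nlinarith) h
  have h3 : 0 < Real.Gamma (m + 3 / 2) := Real.Gamma_pos_of_pos (by positivity)
  have h4 : 0 < Real.Gamma (m + i + 3 / 2) := Real.Gamma_pos_of_pos (by positivity)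
  rw [abs_of_pos (by positivity)]
  apply one_div_le_one_div_of_le (by positivity)
  calc Real.Gamma (3 / 2) * Real.Gamma (i + 3 / 2) * m.factorial
      = (m.factorial * Real.Gamma (3 / 2)) * Real.Gamma (i + 3 / 2) := by ring
    _ ≤ _ := by gcongr

lemma fc_J0_deriv (x : ℝ) : HasDerivAt (besselJ 0) (-besselJ 1 x) x := by
  have h := fc_deriv _ _ (fc_bessel_coef 0) 0 x
  refine h.congr_deriv ?_
  have hs : Summable (fun m : ℕ => (-1 : ℝ) ^ m / (m.factorial * Real.Gamma (m + 1 + (1:ℕ))) *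
      (x / 2) ^ (2 * m + 1)) := fc_summable' _ _ (fc_bessel_coef 1) 1 x
  have key : ∀ m : ℕ, (-1 : ℝ) ^ (m+1) / ((m+1).factorial * Real.Gamma ((m+1 : ℕ) + 1 + (0:ℕ))) *
      ((2 * (m+1 : ℕ) + (0:ℕ)) / 2) * (x / 2) ^ (2 * (m+1) + 0 - 1) =
      -((-1 : ℝ) ^ m / (m.factorial * Real.Gamma (m + 1 + (1:ℕ))) * (x / 2) ^ (2 * m + 1)) := by
    intro m
    have hG : 0 < Real.Gamma (m + 1 + 1) := Real.Gamma_pos_of_pos (by positivity)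
    have : 2 * (m+1) + 0 - 1 = 2 * m + 1 := by omega
    rw [this, Nat.factorial_succ]
    push_cast
    rw [add_zero, pow_succ]
    field_simp
    ring
  rw [Summable.tsum_eq_zero_add]
  · rw [tsum_congr key, tsum_neg]
    simp [besselJ]
  · rw [← summable_nat_add_iff 1]
    exact hs.neg.congr (fun m => (key m).symm)

lemma fc_Jpow_deriv (i : ℕ) (x : ℝ) :
    HasDerivAt (fun x => x ^ (i + 1) * besselJ (i + 1) x) (x ^ (i + 1) * besselJ i x) x := by
  have h := (fc_deriv _ _ (fc_bessel_coef (i+1)) (2 * (i + 1)) x).const_mul (2 ^ (i + 1))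
  have e : (fun x => x ^ (i + 1) * besselJ (i + 1) x) = fun y : ℝ => 2 ^ (i + 1) *
      ∑' m : ℕ, (-1 : ℝ) ^ m / (m.factorial * Real.Gamma (m + 1 + (i + 1 : ℕ))) *
        (y / 2) ^ (2 * m + 2 * (i + 1)) := by
    funext y
    simp only [besselJ]
    rw [← tsum_mul_left, ← tsum_mul_left]
    refine tsum_congr fun m => ?_
    have : y ^ (i + 1) = 2 ^ (i + 1) * (y / 2) ^ (i + 1) := by rw [← mul_pow]; congr 1; ring
    rw [this]; ring
  rw [e]
  refine h.congr_deriv ?_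
  simp only [besselJ]
  rw [← tsum_mul_left, ← tsum_mul_left]
  refine tsum_congr fun m => ?_
  have h1 : x ^ (i + 1) = 2 ^ (i + 1) * (x / 2) ^ (i + 1) := by rw [← mul_pow]; congr 1; ring
  have h2 : 2 * m + 2 * (i + 1) - 1 = (2 * m + i) + (i + 1) := by omega
  have hG : 0 < Real.Gamma (m + 1 + i) := Real.Gamma_pos_of_pos (by positivity)
  have h3 : Real.Gamma (m + 1 + (i + 1 : ℕ)) = (m + 1 + i) * Real.Gamma (m + 1 + i) := by
    rw [← Real.Gamma_add_one (by positivity)]; congr 1; push_cast; ring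
  rw [h1, h2, h3, pow_add _ (2 * m + i)]
  push_cast
  field_simp
  ring

lemma fc_H1_deriv (x : ℝ) :
    HasDerivAt (fun x => x * struveH 1 x) (x * struveH 0 x) x := by
  have h := (fc_deriv _ _ (fc_struve_coef 1) 3 x).const_mul 2
  have e : (fun x => x * struveH 1 x) = fun y : ℝ => 2 *
      ∑' m : ℕ, (-1 : ℝ) ^ m / (Real.Gamma (m + 3 / 2) * Real.Gamma (m + (1 : ℕ) + 3 / 2)) *
        (y / 2) ^ (2 * m + 3) := by
    funext y
    simp only [struveH]
    rw [← tsum_mul_left, ← tsum_mul_left]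
    refine tsum_congr fun m => ?_
    ring
  rw [e]
  refine h.congr_deriv ?_
  simp only [struveH]
  rw [← tsum_mul_left, ← tsum_mul_left]
  refine tsum_congr fun m => ?_
  have h2 : 2 * m + 3 - 1 = 2 * m + 2 := by omega
  have hG : 0 < Real.Gamma (m + 3 / 2) := Real.Gamma_pos_of_pos (by positivity)
  have h3 : Real.Gamma (m + (1 : ℕ) + 3 / 2) = (m + 3 / 2) * Real.Gamma (m + 3 / 2) := by
    rw [← Real.Gamma_add_one (by positivity)]; congr 1; push_cast; ring
  rw [h2, h3]
  push_cast
  rw [add_zero]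
  field_simp
  ring

lemma fc_H0_deriv (x : ℝ) : HasDerivAt (struveH 0) (2 / π - struveH 1 x) x := by
  have h := fc_deriv _ _ (fc_struve_coef 0) 1 x
  refine h.congr_deriv ?_
  have hs : Summable (fun m : ℕ => (-1 : ℝ) ^ m / (Real.Gamma (m + 3 / 2) *
      Real.Gamma (m + (1:ℕ) + 3 / 2)) *
      (x / 2) ^ (2 * m + 2)) := fc_summable' _ _ (fc_struve_coef 1) 2 x
  have key : ∀ m : ℕ, (-1 : ℝ) ^ (m+1) / (Real.Gamma ((m + 1 : ℕ) + 3 / 2) *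
      Real.Gamma ((m+1 : ℕ) + (0:ℕ) + 3 / 2)) *
      ((2 * (m+1 : ℕ) + (1:ℕ)) / 2) * (x / 2) ^ (2 * (m+1) + 1 - 1) =
      -((-1 : ℝ) ^ m / (Real.Gamma (m + 3 / 2) * Real.Gamma (m + (1:ℕ) + 3 / 2)) *
        (x / 2) ^ (2 * m + 2)) := by
    intro m
    have hG : 0 < Real.Gamma (m + 3 / 2) := Real.Gamma_pos_of_pos (by positivity)
    have : 2 * (m+1) + 1 - 1 = 2 * m + 2 := by omega
    have h3 : Real.Gamma (m + 1 + 3 / 2) = (m + 3 / 2) * Real.Gamma (m + 3 / 2) := by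
      rw [← Real.Gamma_add_one (by positivity)]; congr 1; ring
    rw [this]
    push_cast
    rw [add_zero, pow_succ, h3]
    field_simp
    ring
  rw [Summable.tsum_eq_zero_add]
  · rw [tsum_congr key, tsum_neg]
    have h32 : Real.Gamma (3 / 2) = √π / 2 := by
      rw [show (3/2 : ℝ) = 1 / 2 + 1 by norm_num, Real.Gamma_add_one (by norm_num),
        Real.Gamma_one_half_eq]; ring
    simp only [struveH]
    norm_num [h32]
    have := Real.mul_self_sqrt Real.pi_pos.le
    rw [div_mul_div_comm, this]
    have := Real.pi_pos
    rw [sub_eq_add_neg]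
    congr 1
    field_simp
  · rw [← summable_nat_add_iff 1]
    exact hs.neg.congr (fun m => (key m).symm)

/-- Antiderivative of `J₀`. -/
noncomputable def fcP (x : ℝ) : ℝ :=
  π / 2 * (x * besselJ 1 x * struveH 0 x - besselJ 0 x * (x * struveH 1 x)) + x * besselJ 0 x

lemma fc_xJ1_deriv (x : ℝ) : HasDerivAt (fun x => x * besselJ 1 x) (x * besselJ 0 x) x := by
  simpa using fc_Jpow_deriv 0 x

lemma fcP_deriv (x : ℝ) : HasDerivAt fcP (besselJ 0 x) x := by
  have h := ((((fc_xJ1_deriv x).mul (fc_H0_deriv x)).sub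
    ((fc_J0_deriv x).mul (fc_H1_deriv x))).const_mul (π / 2)).add
    ((hasDerivAt_id x).mul (fc_J0_deriv x))
  refine h.congr_deriv ?_
  have := Real.pi_pos
  simp only [id]
  field_simp
  ring

lemma fc_A2_deriv (x : ℝ) :
    HasDerivAt (fun x => x * (x * besselJ 1 x) + x * besselJ 0 x - fcP x)
      (x ^ 2 * besselJ 0 x) x := by
  have h := (((hasDerivAt_id x).mul (fc_xJ1_deriv x)).add
    ((hasDerivAt_id x).mul (fc_J0_deriv x))).sub (fcP_deriv x)
  refine h.congr_deriv ?_
  simp only [id]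
  ring

lemma fc_A3_deriv (x : ℝ) :
    HasDerivAt (fun x => x ^ 2 * (x * besselJ 1 x) - 2 * (x ^ 2 * besselJ 2 x))
      (x ^ 3 * besselJ 0 x) x := by
  have h := (((hasDerivAt_id x).pow 2).mul (fc_xJ1_deriv x)).sub
    ((fc_Jpow_deriv 1 x).const_mul 2)
  refine h.congr_deriv ?_
  simp only [id, Pi.pow_apply]
  ring

lemma fc_J0_cont : Continuous (besselJ 0) :=
  continuous_iff_continuousAt.2 fun x => (fc_J0_deriv x).continuousAt

lemma fc_radial (R ℓ q : ℝ) (hq : 0 < q) :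
    ∫ r in (0:ℝ)..R, r * ((r - ℓ) ^ 2 - (R - ℓ) ^ 2) * besselJ 0 (q * r) =
      2 * ((π * R ^ 3 * ℓ / (2 * (q * R) ^ 2)) *
            (besselJ 1 (q * R) * struveH 0 (q * R) - besselJ 0 (q * R) * struveH 1 (q * R)) -
          (R ^ 4 / (q * R) ^ 2) * besselJ 2 (q * R)) := by
  have hd : ∀ r : ℝ, HasDerivAt (fun r : ℝ =>
      q⁻¹ ^ 4 * ((q * r) ^ 2 * ((q * r) * besselJ 1 (q * r)) - 2 * ((q * r) ^ 2 * besselJ 2 (q * r)))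
      - 2 * ℓ * q⁻¹ ^ 3 * ((q * r) * ((q * r) * besselJ 1 (q * r)) + (q * r) * besselJ 0 (q * r)
          - fcP (q * r))
      + (2 * ℓ * R - R ^ 2) * q⁻¹ ^ 2 * ((q * r) * besselJ 1 (q * r)))
      (r * ((r - ℓ) ^ 2 - (R - ℓ) ^ 2) * besselJ 0 (q * r)) r := by
    intro r
    have hm : HasDerivAt (fun r : ℝ => q * r) q r := by
      simpa using (hasDerivAt_id r).const_mul q
    have h3 := ((fc_A3_deriv (q * r)).comp r hm).const_mul (q⁻¹ ^ 4)
    have h2 := ((fc_A2_deriv (q * r)).comp r hm).const_mul (2 * ℓ * q⁻¹ ^ 3)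
    have h1 := ((fc_xJ1_deriv (q * r)).comp r hm).const_mul ((2 * ℓ * R - R ^ 2) * q⁻¹ ^ 2)
    refine ((h3.sub h2).add h1).congr_deriv ?_
    field_simp
    ring
  rw [intervalIntegral.integral_eq_sub_of_hasDerivAt (fun r _ => hd r)]
  · simp only [fcP]
    field_simp
    ring
  · have := fc_J0_cont
    exact Continuous.intervalIntegrable (by fun_prop) _ _

lemma fc_cos_pow (m : ℕ) : ∫ θ in (-π)..π, Real.cos θ ^ (2 * m) =
    2 * π * ((2 * m).factorial / (4 ^ m * (m.factorial : ℝ) ^ 2)) := by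
  induction m with
  | zero => simp; ring
  | succ n ih =>
    rw [show 2 * (n + 1) = 2 * n + 2 by ring, integral_cos_pow, ih, Nat.factorial_succ,
      Nat.factorial_succ, Nat.factorial_succ]
    simp only [Real.sin_pi, Real.sin_neg]
    push_cast
    field_simp
    ring

lemma fc_cos_int (t : ℝ) : ∫ θ in (-π)..π, Real.cos (t * Real.cos θ) = 2 * π * besselJ 0 t := by
  have h : HasSum (fun n : ℕ => ∫ θ in (-π)..π,
      ((-1 : ℝ) ^ n * (t * Real.cos θ) ^ (2 * n) / ((2 * n).factorial : ℝ)))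
      (∫ θ in (-π)..π, Real.cos (t * Real.cos θ)) := by
    refine intervalIntegral.hasSum_integral_of_dominated_convergence
      (fun n _ => |t| ^ (2 * n) / ((2 * n).factorial : ℝ)) ?_ ?_ ?_ ?_ ?_
    · intro n
      exact Continuous.aestronglyMeasurable (by fun_prop)
    · intro n
      filter_upwards with θ _
      rw [Real.norm_eq_abs, abs_div, abs_mul, abs_pow, abs_pow, abs_neg, abs_one, one_pow, one_mul,
        Nat.abs_cast, abs_mul]
      gcongr
      exact mul_le_of_le_one_right (abs_nonneg _) (Real.abs_cos_le_one θ)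
    · filter_upwards with θ _
      exact (Real.summable_pow_div_factorial |t|).comp_injective
        (i := fun n : ℕ => 2 * n) (fun a b h => by simpa using h)
    · exact intervalIntegrable_const
    · filter_upwards with θ _
      exact Real.hasSum_cos _
  rw [← h.tsum_eq, besselJ, ← tsum_mul_left]
  refine tsum_congr fun m => ?_
  have : ∀ θ : ℝ, ((-1 : ℝ) ^ m * (t * Real.cos θ) ^ (2 * m) / ((2 * m).factorial : ℝ)) =
      ((-1 : ℝ) ^ m * t ^ (2 * m) / ((2 * m).factorial : ℝ)) * Real.cos θ ^ (2 * m) := by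
    intro θ; rw [mul_pow]; ring
  simp_rw [this]
  rw [intervalIntegral.integral_const_mul, fc_cos_pow]
  push_cast
  rw [add_zero, add_zero, Real.Gamma_nat_eq_factorial, div_pow, pow_mul 2]
  have : ((2 * m).factorial : ℝ) ≠ 0 := by positivity
  field_simp
  norm_num

lemma fc_exp_int (t φ : ℝ) :
    ∫ θ in (-π)..π, Complex.exp (-(Complex.I * ((t * Real.cos (θ - φ) : ℝ) : ℂ))) =
      ((2 * π * besselJ 0 t : ℝ) : ℂ) := by
  set f : ℝ → ℂ := fun θ => Complex.exp (-(Complex.I * ((t * Real.cos θ : ℝ) : ℂ))) with hf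
  have hper : Function.Periodic f (2 * π) := by
    intro θ; simp only [hf, Real.cos_add_two_pi]
  have hcont : Continuous f := by
    simp only [hf]; fun_prop
  have hshift : ∀ a : ℝ, ∫ θ in (-π)..π, f (θ - a) = ∫ θ in (-π)..π, f θ := by
    intro a
    rw [intervalIntegral.integral_comp_sub_right]
    have := hper.intervalIntegral_add_eq (-π - a) (-π)
    rw [show -π - a + 2 * π = π - a by ring, show -π + 2 * π = π by ring] at this
    exact this
  have h1 : ∫ θ in (-π)..π, f (θ - φ) = ∫ θ in (-π)..π, f θ := hshift φ
  have h2 := hshift π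
  have h3 : (∫ θ in (-π)..π, f θ) + (∫ θ in (-π)..π, f (θ - π)) =
      ∫ θ in (-π)..π, ((2 * Real.cos (t * Real.cos θ) : ℝ) : ℂ) := by
    rw [← intervalIntegral.integral_add (hcont.intervalIntegrable _ _)
      ((by fun_prop : Continuous fun θ : ℝ => f (θ - π)).intervalIntegrable _ _)]
    refine intervalIntegral.integral_congr fun θ _ => ?_
    simp only [hf, Real.cos_sub_pi]
    push_cast
    rw [Complex.two_cos]
    rw [add_comm]
    congr 2 <;> ring
  rw [h2, intervalIntegral.integral_ofReal, intervalIntegral.integral_const_mul, fc_cos_int] at h3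
  change ∫ θ in (-π)..π, f (θ - φ) = _
  rw [h1]
  have h4 : (2:ℂ) * (∫ θ in (-π)..π, f θ) = 2 * ((2 * π * besselJ 0 t : ℝ) : ℂ) := by
    rw [two_mul, h3]; push_cast; ring
  exact mul_left_cancel₀ two_ne_zero h4

lemma fc_polar (L R ℓ : ℝ) (hL : 0 < L) (hR : 0 < R) (hRL : R ≤ L) (a b q φ : ℝ)
    (ha : a = q * Real.cos φ) (hb : b = q * Real.sin φ) :
    ∫ x in Set.Icc (-L) L ×ˢ Set.Icc (-L) L, (potV2 R ℓ x : ℂ) *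
      Complex.exp (-(Complex.I * ((a * x.1 + b * x.2 : ℝ) : ℂ))) =
    ((2 * π * ∫ r in (0:ℝ)..R, r * ((r - ℓ) ^ 2 - (R - ℓ) ^ 2) * besselJ 0 (q * r) : ℝ) : ℂ) := by
  have hpi := Real.pi_pos
  rw [setIntegral_eq_integral_of_forall_compl_eq_zero, ← integral_comp_polarCoord_symm]
  swap
  · rintro ⟨x, y⟩ hxy
    have : potV2 R ℓ (x, y) = 0 := by
      unfold potV2
      rw [if_neg]
      intro hlt
      apply hxy
      have hx : |x| ≤ √(x ^ 2 + y ^ 2) := Real.abs_le_sqrt (by nlinarith)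
      have hy : |y| ≤ √(x ^ 2 + y ^ 2) := Real.abs_le_sqrt (by nlinarith)
      simp only at hlt
      exact ⟨abs_le.1 (by linarith), abs_le.1 (by linarith)⟩
    rw [this]; simp
  set h : ℝ × ℝ → ℂ := fun p => ((p.1 * ((p.1 - ℓ) ^ 2 - (R - ℓ) ^ 2) : ℝ) : ℂ) *
      Complex.exp (-(Complex.I * ((q * p.1 * Real.cos (p.2 - φ) : ℝ) : ℂ))) with hh
  have hsqrt : ∀ r θ : ℝ, 0 < r → √((r * Real.cos θ) ^ 2 + (r * Real.sin θ) ^ 2) = r := by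
    intro r θ hr
    rw [mul_pow, mul_pow, ← mul_add, Real.cos_sq_add_sin_sq, mul_one, Real.sqrt_sq hr.le]
  have step1 : ∫ p in polarCoord.target, p.1 • ((potV2 R ℓ (polarCoord.symm p) : ℂ) *
      Complex.exp (-(Complex.I * ((a * (polarCoord.symm p).1 + b * (polarCoord.symm p).2 : ℝ) : ℂ))))
      = ∫ p in Set.Ioc 0 R ×ˢ Set.Ioo (-π) π, h p := by
    rw [setIntegral_eq_of_subset_of_forall_sdiff_eq_zero
      (s := Set.Ioc 0 R ×ˢ Set.Ioo (-π) π) polarCoord.open_target.measurableSet]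
    · refine setIntegral_congr_fun (measurableSet_Ioc.prod measurableSet_Ioo) ?_
      rintro ⟨r, θ⟩ ⟨⟨hr0, hrR⟩, _⟩
      simp only at hr0 hrR
      have hV : potV2 R ℓ (r * Real.cos θ, r * Real.sin θ) = (r - ℓ) ^ 2 - (R - ℓ) ^ 2 := by
        unfold potV2
        simp only [hsqrt r θ hr0]
        split_ifs with hlt
        · rfl
        · have : r = R := le_antisymm hrR (not_lt.1 hlt)
          rw [this]; ring
      simp only [polarCoord_symm_apply, hh, hV, Complex.real_smul]
      rw [← mul_assoc, ← Complex.ofReal_mul]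
      congr 5
      rw [ha, hb, Real.cos_sub]; ring
    · rintro ⟨r, θ⟩ ⟨⟨h1, _⟩, h2⟩
      exact ⟨h1, h2⟩
    · rintro ⟨r, θ⟩ ⟨⟨h1, h2⟩, h3⟩
      have hr : 0 < r := h1
      have hrR : ¬ r < R := fun hlt => h3 ⟨⟨hr, hlt.le⟩, h2⟩
      have hV : potV2 R ℓ (r * Real.cos θ, r * Real.sin θ) = 0 := by
        unfold potV2
        simp only [hsqrt r θ hr]
        rw [if_neg hrR]
      simp only [polarCoord_symm_apply, hV]
      simp
  rw [step1]
  have hint : IntegrableOn h (Set.Ioc 0 R ×ˢ Set.Ioo (-π) π) (volume.prod volume) := by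
    have hc : Continuous h := by simp only [hh]; fun_prop
    exact (hc.continuousOn.integrableOn_compact (isCompact_Icc.prod isCompact_Icc)).mono_set
      (Set.prod_mono Set.Ioc_subset_Icc_self Set.Ioo_subset_Icc_self)
  rw [Measure.volume_eq_prod, setIntegral_prod _ hint]
  have inner : ∀ r : ℝ, ∫ θ in Set.Ioo (-π) π, h (r, θ) =
      ((2 * π * (r * ((r - ℓ) ^ 2 - (R - ℓ) ^ 2) * besselJ 0 (q * r)) : ℝ) : ℂ) := by
    intro r
    rw [← integral_Ioc_eq_integral_Ioo, ← intervalIntegral.integral_of_le (by linarith)]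
    simp only [hh]
    rw [intervalIntegral.integral_const_mul, fc_exp_int]
    push_cast; ring
  simp_rw [inner]
  rw [← intervalIntegral.integral_of_le hR.le, intervalIntegral.integral_ofReal,
    intervalIntegral.integral_const_mul]

theorem fourier_coefficient_formula_2D (L R ℓ : ℝ) (hL : 0 < L) (hR : 0 < R) (hRL : R ≤ L)
    (hℓ : 0 ≤ ℓ) (k₁ k₂ : ℤ) (hk : (k₁, k₂) ≠ (0, 0)) :
    letI z : ℝ := π * R * Real.sqrt ((k₁ : ℝ) ^ 2 + (k₂ : ℝ) ^ 2) / L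
    Vhat2C L R ℓ k₁ k₂ =
      (((π / L ^ 2) *
        ((π * R ^ 3 * ℓ / (2 * z ^ 2)) *
            (besselJ 1 z * struveH 0 z - besselJ 0 z * struveH 1 z) -
          (R ^ 4 / z ^ 2) * besselJ 2 z) : ℝ) : ℂ) := by
  set z : ℝ := π * R * Real.sqrt ((k₁ : ℝ) ^ 2 + (k₂ : ℝ) ^ 2) / L with hzdef
  set ρ : ℝ := Real.sqrt ((k₁ : ℝ) ^ 2 + (k₂ : ℝ) ^ 2) with hρ
  set w : ℂ := ⟨(k₁ : ℝ), (k₂ : ℝ)⟩ with hw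
  have hnorm : ‖w‖ = ρ := by
    rw [hρ, Complex.norm_eq_sqrt_sq_add_sq]
  have hρpos : 0 < ρ := by
    rw [← hnorm, norm_pos_iff]
    intro h0
    apply hk
    have e1 : (k₁ : ℝ) = 0 := congrArg Complex.re h0
    have e2 : (k₂ : ℝ) = 0 := congrArg Complex.im h0
    rw [Prod.mk.injEq]
    exact ⟨by exact_mod_cast e1, by exact_mod_cast e2⟩
  have hpi := Real.pi_pos
  have hc : ρ * Real.cos w.arg = k₁ := by
    rw [← hnorm, Complex.norm_mul_cos_arg]
  have hs : ρ * Real.sin w.arg = k₂ := by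
    rw [← hnorm, Complex.norm_mul_sin_arg]
  set q : ℝ := π * ρ / L with hq
  have hqpos : 0 < q := by positivity
  have hz : z = q * R := by
    rw [hzdef, hq]; ring
  have main := fc_polar L R ℓ hL hR hRL (π * k₁ / L) (π * k₂ / L) q w.arg
    (by rw [hq, ← hc]; ring) (by rw [hq, ← hs]; ring)
  rw [fc_radial R ℓ q hqpos, ← hz] at main
  have e : Vhat2C L R ℓ k₁ k₂ = (1 / (2 * (L : ℂ))) ^ 2 *
      ∫ x in Set.Icc (-L) L ×ˢ Set.Icc (-L) L, (potV2 R ℓ x : ℂ) *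
      Complex.exp (-(Complex.I * ((π * k₁ / L * x.1 + π * k₂ / L * x.2 : ℝ) : ℂ))) := by
    unfold Vhat2C
    congr 2
    funext x
    congr 2
    push_cast
    ring
  rw [e, main, show (1 / (2 * (L : ℂ))) ^ 2 = (((1 / (2 * L)) ^ 2 : ℝ) : ℂ) by push_cast; rfl,
    ← Complex.ofReal_mul]
  congr 1
  field_simp
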